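/- Let G be a finite perfect graph with vertex set V and let w : V → ℕ be an integer weight function. Then there exists an integer-valued core imputation of the investment management game: a function y assigning a natural number y(Q) to each maximal clique Q of G such that ∑_Q y(Q) = cost(V) and money_y(S) ≥ cost(S) for every scenario S ⊆ V. -/

import Mathlib

/-!
The claim is total dual integrality of the clique relaxation of the stable set polytope of a
perfect graph, proved by Lovász's two-step replication argument. All covers are multisets of vertex
sets, and the multiplicity with which `v` is covered is `M.countP (v ∈ ·)`.

* `exists_stable_cover`: if every clique has `f`-weight at most `k`, then `k` stable sets cover
  every vertex `v` at least `f v` times. For `f ≤ 1` this is perfection of the subgraph induced on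
  the support of `f`. If `2 ≤ f v`, cover `f - 1_v` by `k` stable sets, choose one, `A`, containing
  `v`, and observe that `f - 1_A` has clique weight at most `k - 1`.
* `exists_clique_cover`: if every stable set has `w`-weight at most `k`, then `k` cliques cover
  every `v` at least `w v` times. By induction on `k` it suffices to find a clique `Q` such that
  `w - 1_Q` has stable weight smaller by one. If there is none, every clique `Q` misses some
  maximum weight stable set `O Q`; with `N` cliques in total, the multiplicities of the family `O`
  have clique weight at most `N - 1`, so they are covered by `N - 1` stable sets, which contradicts
  the total weight `N * (k + 1)` of the family.

Enlarging the cliques of an optimal cover to maximal ones and letting `y Q` be the multiplicity of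
`Q` gives the imputation. It is in the core by weak duality, `sum_countP_le_countP`: a stable set
meets a clique at most once.
-/

open Finset

/-- `O` is a stable (independent) set in `G`. -/
def IsStableSet {V : Type*} (G : SimpleGraph V) (O : Finset V) : Prop :=
  ∀ u ∈ O, ∀ v ∈ O, ¬ G.Adj u v

/-- `Q` is a clique in `G`. -/
def IsCliqueF {V : Type*} (G : SimpleGraph V) (Q : Finset V) : Prop :=
  ∀ u ∈ Q, ∀ v ∈ Q, u ≠ v → G.Adj u v

/-- `Q` is a maximal clique in `G`. -/
def IsMaximalCliqueF {V : Type*} (G : SimpleGraph V) (Q : Finset V) : Prop :=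
  IsCliqueF G Q ∧ ∀ Q', IsCliqueF G Q' → Q ⊆ Q' → Q' = Q

open Classical in
/-- The set of maximal cliques of `G`. -/
noncomputable def maximalCliques {V : Type*} (G : SimpleGraph V) [Fintype V] :
    Finset (Finset V) :=
  univ.powerset.filter (IsMaximalCliqueF G)

open Classical in
/-- The set of all cliques of `G`. -/
noncomputable def cliques {V : Type*} (G : SimpleGraph V) [Fintype V] :
    Finset (Finset V) :=
  univ.powerset.filter (IsCliqueF G)

open Classical in
/-- `cost S` : maximum weight of a stable set contained in `S`. -/
noncomputable def cost {V : Type*} (G : SimpleGraph V) [Fintype V] (w : V → ℚ)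
    (S : Finset V) : ℚ :=
  (S.powerset.filter (IsStableSet G)).sup'
    ⟨∅, by simp [IsStableSet]⟩ (fun O => ∑ v ∈ O, w v)

open Classical in
/-- Integer version of `cost`. -/
noncomputable def costNat {V : Type*} (G : SimpleGraph V) [Fintype V] (w : V → ℕ)
    (S : Finset V) : ℕ :=
  (S.powerset.filter (IsStableSet G)).sup'
    ⟨∅, by simp [IsStableSet]⟩ (fun O => ∑ v ∈ O, w v)

open Classical in
/-- `money y S` : total dual weight of the maximal cliques intersecting `S`. -/
noncomputable def money {V : Type*} (G : SimpleGraph V) [Fintype V]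
    (y : Finset V → ℚ) (S : Finset V) : ℚ :=
  ∑ Q ∈ (maximalCliques G).filter (fun Q => (Q ∩ S).Nonempty), y Q

/-- `G` is a perfect graph: for every induced subgraph, the clique number
equals the chromatic number. -/
def IsPerfect {V : Type*} (G : SimpleGraph V) [Fintype V] : Prop :=
  ∀ S : Finset V,
    ((G.induce (S : Set V)).cliqueNum : ℕ∞) = (G.induce (S : Set V)).chromaticNumber

open Classical in
/-- Weak duality: if `O` meets each member of `M` at most once, then the multiplicities with which
`M` covers the points of `O` add up to at most the number of members that meet `O`. -/
lemma sum_countP_le_countP {V : Type*} (O : Finset V) (M : Multiset (Finset V))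
    (h : ∀ A ∈ M, (A ∩ O).card ≤ 1) :
    ∑ v ∈ O, M.countP (v ∈ ·) ≤ M.countP (fun A => (A ∩ O).Nonempty) := by
  induction M using Multiset.induction_on with
  | empty => simp
  | cons A M ih =>
    have ih' := ih (fun B hB => h B (Multiset.mem_cons_of_mem hB))
    have hA := h A (Multiset.mem_cons_self A M)
    simp only [Multiset.countP_cons, Finset.sum_add_distrib]
    have hc : ∑ v ∈ O, (if v ∈ A then 1 else 0) = (A ∩ O).card := by
      rw [Finset.sum_boole, Finset.inter_comm, Finset.filter_mem_eq_inter]; simp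
    rw [hc]
    split_ifs with hne
    · omega
    · rw [Finset.not_nonempty_iff_eq_empty] at hne
      simp [hne, ih']

open Classical in
lemma sum_countP_mul {V : Type*} [Fintype V] (w : V → ℕ) (M : Multiset (Finset V)) :
    ∑ v, M.countP (v ∈ ·) * w v = (M.map (fun A => ∑ v ∈ A, w v)).sum := by
  induction M using Multiset.induction_on with
  | empty => simp
  | cons A M ih =>
    simp only [Multiset.countP_cons, add_mul, Finset.sum_add_distrib, ih, Multiset.map_cons,
      Multiset.sum_cons, ite_mul, one_mul, zero_mul, Finset.sum_ite_mem, Finset.univ_inter]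
    omega

open Classical in
lemma card_clique_inter_stable_le_one {V : Type*} {G : SimpleGraph V} {Q O : Finset V}
    (hQ : IsCliqueF G Q) (hO : IsStableSet G O) : (Q ∩ O).card ≤ 1 := by
  rw [Finset.card_le_one]
  intro a ha b hb
  rw [Finset.mem_inter] at ha hb
  by_contra hne
  exact hO a ha.2 b hb.2 (hQ a ha.1 b hb.1 hne)

open Classical in
/-- The `0/1`-weighted case of `exists_stable_cover`: the colour classes of an optimal colouring of
the subgraph induced on the support of `f`. -/
lemma exists_stable_cover_of_le_one {V : Type*} [Fintype V] (G : SimpleGraph V)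
    (hG : IsPerfect G) (f : V → ℕ) (hf : ∀ v, f v ≤ 1) (k : ℕ)
    (hk : ∀ K, IsCliqueF G K → ∑ v ∈ K, f v ≤ k) :
    ∃ M : Multiset (Finset V), M.card = k ∧ (∀ A ∈ M, IsStableSet G A) ∧
      ∀ v, f v ≤ M.countP (v ∈ ·) := by
  set S : Finset V := Finset.univ.filter (fun v => f v ≠ 0) with hS
  have hcl : (G.induce (S : Set V)).cliqueNum ≤ k := by
    obtain ⟨s, hs⟩ := (G.induce (S : Set V)).exists_isNClique_cliqueNum
    rw [← hs.card_eq]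
    refine le_trans ?_ (hk (s.map (Function.Embedding.subtype _)) ?_)
    · rw [Finset.sum_map, Finset.card_eq_sum_ones]
      refine Finset.sum_le_sum fun v _ => ?_
      have hv : (v : V) ∈ S := v.2
      have : f v ≠ 0 := (Finset.mem_filter.1 hv).2
      simp only [Function.Embedding.subtype_apply]
      omega
    · intro u hu v hv huv
      simp only [Finset.mem_map, Function.Embedding.subtype_apply] at hu hv
      obtain ⟨u', hu', rfl⟩ := hu
      obtain ⟨v', hv', rfl⟩ := hv
      exact hs.isClique hu' hv' (fun h => huv (congrArg _ h))
  have hcol : (G.induce (S : Set V)).Colorable k := by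
    rw [← SimpleGraph.chromaticNumber_le_iff_colorable, ← hG S]
    exact_mod_cast hcl
  obtain ⟨c⟩ := hcol
  let B : Fin k → Finset V := fun i =>
    Finset.univ.filter (fun v => ∃ h : v ∈ (S : Set V), c ⟨v, h⟩ = i)
  refine ⟨Finset.univ.val.map B, by simp, ?_, ?_⟩
  · intro A hA
    simp only [Multiset.mem_map] at hA
    obtain ⟨i, -, rfl⟩ := hA
    intro u hu v hv huv
    simp only [B, Finset.mem_filter, Finset.mem_univ, true_and] at hu hv
    obtain ⟨hu, hcu⟩ := hu
    obtain ⟨hv, hcv⟩ := hv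
    exact c.valid (v := ⟨u, hu⟩) (w := ⟨v, hv⟩) huv (hcu.trans hcv.symm)
  · intro v
    by_cases hv : f v = 0
    · omega
    · refine (hf v).trans (Multiset.countP_pos.2 ?_)
      have hvS : v ∈ (S : Set V) := by simp [hS, hv]
      exact ⟨B (c ⟨v, hvS⟩), Multiset.mem_map_of_mem _ (Finset.mem_univ_val _), by simpa [B] using hvS⟩

open Classical in
/-- The replication lemma in weighted form: the induced subgraphs being optimally colourable, every
vertex weighting is optimally colourable. -/
lemma exists_stable_cover {V : Type*} [Fintype V] (G : SimpleGraph V)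
    (hG : IsPerfect G) (n : ℕ) : ∀ (f : V → ℕ), ∑ v, f v = n → ∀ k : ℕ,
    (∀ K, IsCliqueF G K → ∑ v ∈ K, f v ≤ k) →
    ∃ M : Multiset (Finset V), M.card = k ∧ (∀ A ∈ M, IsStableSet G A) ∧
      ∀ v, f v ≤ M.countP (v ∈ ·) := by
  induction n using Nat.strong_induction_on with
  | _ n ih =>
  intro f hn k hk
  by_cases hf : ∀ v, f v ≤ 1
  · exact exists_stable_cover_of_le_one G hG f hf k hk
  push Not at hf
  obtain ⟨v, hv⟩ := hf
  let f' : V → ℕ := fun u => f u - if u = v then 1 else 0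
  have hf'le : ∀ u, f' u ≤ f u := fun u => Nat.sub_le _ _
  have hlt : ∑ u, f' u < n := by
    rw [← hn]
    refine Finset.sum_lt_sum (fun u _ => hf'le u) ⟨v, Finset.mem_univ v, ?_⟩
    simp only [f', if_true]; omega
  obtain ⟨M, hMk, hMst, hMc⟩ := ih _ hlt f' rfl k
    (fun K hK => (Finset.sum_le_sum fun u _ => hf'le u).trans (hk K hK))
  have hpos : 0 < M.countP (v ∈ ·) := by
    refine lt_of_lt_of_le ?_ (hMc v)
    simp only [f', if_true]; omega
  obtain ⟨A, hAM, hvA⟩ := Multiset.countP_pos.1 hpos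
  obtain ⟨M', rfl⟩ := Multiset.exists_cons_of_mem hAM
  rw [Multiset.card_cons] at hMk
  let f'' : V → ℕ := fun u => f u - if u ∈ A then 1 else 0
  have hf''le : ∀ u, f'' u ≤ f u := fun u => Nat.sub_le _ _
  have hlt'' : ∑ u, f'' u < n := by
    rw [← hn]
    refine Finset.sum_lt_sum (fun u _ => hf''le u) ⟨v, Finset.mem_univ v, ?_⟩
    simp only [f'', hvA, if_true]; omega
  have hk'' : ∀ K, IsCliqueF G K → ∑ u ∈ K, f'' u ≤ M'.card := by
    intro K hK
    by_cases hex : ∃ u ∈ K, u ∈ A ∧ f u ≠ 0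
    · obtain ⟨u, huK, huA, hu0⟩ := hex
      have h1 : ∑ u ∈ K, f'' u < ∑ u ∈ K, f u := by
        refine Finset.sum_lt_sum (fun u _ => hf''le u) ⟨u, huK, ?_⟩
        simp only [f'', huA, if_true]; omega
      have h2 := hk K hK
      omega
    · push Not at hex
      -- `A` contributes nothing to the weighted part of `K`, so the remaining sets cover `K`.
      have h1 : ∑ u ∈ K, f'' u ≤ ∑ u ∈ K, M'.countP (u ∈ ·) := by
        refine Finset.sum_le_sum fun u hu => ?_
        by_cases huA : u ∈ A
        · have := hex u hu huA
          have := hf''le u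
          omega
        · have h3 := hMc u
          have hne : u ≠ v := fun h => huA (h ▸ hvA)
          simp only [Multiset.countP_cons, huA, f', hne, if_false] at h3
          simp only [f'', huA, if_false]
          omega
      have h2 := sum_countP_le_countP K M' (fun B hB => by
        rw [Finset.inter_comm]
        exact card_clique_inter_stable_le_one hK (hMst B (Multiset.mem_cons_of_mem hB)))
      exact h1.trans (h2.trans (Multiset.countP_le_card _ _))
  obtain ⟨N, hNk, hNst, hNc⟩ := ih _ hlt'' f'' rfl _ hk''
  refine ⟨A ::ₘ N, by rw [Multiset.card_cons]; omega, ?_, ?_⟩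
  · intro B hB
    rcases Multiset.mem_cons.1 hB with rfl | hB
    · exact hMst _ hAM
    · exact hNst B hB
  · intro u
    have := hNc u
    simp only [f''] at this
    rw [Multiset.countP_cons]
    omega

open Classical in
/-- The inductive step of `exists_clique_cover`: some clique `Q` meets every stable set of weight
`k + 1` in a vertex of positive weight, so lowering `w` by one on `Q` lowers the bound. -/
lemma exists_clique_reducing {V : Type*} [Fintype V] (G : SimpleGraph V)
    (hG : IsPerfect G) (w : V → ℕ) (k : ℕ)
    (hk : ∀ O, IsStableSet G O → ∑ v ∈ O, w v ≤ k + 1) :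
    ∃ Q, IsCliqueF G Q ∧
      ∀ O, IsStableSet G O → ∑ v ∈ O, (w v - if v ∈ Q then 1 else 0) ≤ k := by
  by_contra hcon
  push Not at hcon
  have hO : ∀ Q, ∃ O, IsCliqueF G Q → IsStableSet G O ∧ Q ∩ O = ∅ ∧ k + 1 ≤ ∑ v ∈ O, w v := by
    intro Q
    by_cases hQ : IsCliqueF G Q
    · obtain ⟨O, hOst, hOw⟩ := hcon Q hQ
      -- No weight is lost on `O`, so `w` vanishes on `O ∩ Q`, which may therefore be deleted.
      refine ⟨O \ Q, fun _ => ⟨fun u hu v hv => hOst u (Finset.mem_sdiff.1 hu).1 v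
        (Finset.mem_sdiff.1 hv).1, by simp, ?_⟩⟩
      have hz : ∀ u ∈ O, u ∈ Q → w u = 0 := by
        intro u hu huQ
        by_contra h0
        have : ∑ v ∈ O, (w v - if v ∈ Q then 1 else 0) < ∑ v ∈ O, w v := by
          refine Finset.sum_lt_sum (fun v _ => Nat.sub_le _ _) ⟨u, hu, ?_⟩
          simp only [huQ, if_true]; omega
        have := hk O hOst
        omega
      have heq : ∑ v ∈ O \ Q, w v = ∑ v ∈ O, w v := by
        refine Finset.sum_subset Finset.sdiff_subset fun u hu hu' => hz u hu ?_
        by_contra h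
        exact hu' (Finset.mem_sdiff.2 ⟨hu, h⟩)
      rw [heq]
      have : ∑ v ∈ O, (w v - if v ∈ Q then 1 else 0) ≤ ∑ v ∈ O, w v :=
        Finset.sum_le_sum fun v _ => Nat.sub_le _ _
      omega
    · exact ⟨∅, fun h => absurd h hQ⟩
  choose O hO using hO
  have hmem : ∀ Q, Q ∈ cliques G ↔ IsCliqueF G Q := fun Q => by simp [cliques]
  have hne : 0 < (cliques G).card :=
    Finset.card_pos.2 ⟨∅, (hmem ∅).2 (by simp [IsCliqueF])⟩
  let F : Multiset (Finset V) := (cliques G).val.map O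
  have hFcard : F.card = (cliques G).card := by simp [F]
  have hclique : ∀ K, IsCliqueF G K →
      ∑ v ∈ K, F.countP (v ∈ ·) ≤ (cliques G).card - 1 := by
    intro K hK
    have h1 := sum_countP_le_countP K F (fun A hA => by
      obtain ⟨Q, hQ, rfl⟩ := Multiset.mem_map.1 hA
      rw [Finset.inter_comm]
      exact card_clique_inter_stable_le_one hK (hO Q ((hmem Q).1 hQ)).1)
    have h2 : F.countP (fun A => (A ∩ K).Nonempty) < F.card := by
      refine lt_of_le_of_ne (Multiset.countP_le_card _ _) fun h => ?_
      rw [Multiset.countP_eq_card] at h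
      have h3 := h (O K) (Multiset.mem_map_of_mem _ ((hmem K).2 hK))
      rw [Finset.inter_comm, (hO K hK).2.1] at h3
      exact Finset.not_nonempty_empty h3
    omega
  obtain ⟨M, hMcard, hMst, hMc⟩ := exists_stable_cover G hG _ _ rfl _ hclique
  -- Compare the total `w`-weights of the family `F` and of the cover `M`.
  have hlow : (cliques G).card * (k + 1) ≤ ∑ v, F.countP (v ∈ ·) * w v := by
    rw [sum_countP_mul]
    have := Multiset.card_nsmul_le_sum (s := F.map (fun A => ∑ v ∈ A, w v)) (a := k + 1) (by
      intro x hx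
      obtain ⟨A, hA, rfl⟩ := Multiset.mem_map.1 hx
      obtain ⟨Q, hQ, rfl⟩ := Multiset.mem_map.1 hA
      exact (hO Q ((hmem Q).1 hQ)).2.2)
    rwa [Multiset.card_map, hFcard, smul_eq_mul] at this
  have hup : ∑ v, M.countP (v ∈ ·) * w v ≤ ((cliques G).card - 1) * (k + 1) := by
    rw [sum_countP_mul]
    have := Multiset.sum_le_card_nsmul (M.map (fun A => ∑ v ∈ A, w v)) (k + 1) (by
      intro x hx
      obtain ⟨A, hA, rfl⟩ := Multiset.mem_map.1 hx
      exact hk A (hMst A hA))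
    rwa [Multiset.card_map, hMcard, smul_eq_mul] at this
  have hmid : ∑ v, F.countP (v ∈ ·) * w v ≤ ∑ v, M.countP (v ∈ ·) * w v :=
    Finset.sum_le_sum fun v _ => Nat.mul_le_mul_right _ (hMc v)
  have hlt : ((cliques G).card - 1) * (k + 1) < (cliques G).card * (k + 1) :=
    Nat.mul_lt_mul_of_pos_right (by omega) (by omega)
  omega

open Classical in
/-- The weighted form of the weak perfect graph theorem: perfection of `G` yields optimal covers by
cliques, that is, optimal weighted colourings of the complement. -/
lemma exists_clique_cover {V : Type*} [Fintype V] (G : SimpleGraph V)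
    (hG : IsPerfect G) (k : ℕ) : ∀ (w : V → ℕ),
    (∀ O, IsStableSet G O → ∑ v ∈ O, w v ≤ k) →
    ∃ M : Multiset (Finset V), M.card = k ∧ (∀ Q ∈ M, IsCliqueF G Q) ∧
      ∀ v, w v ≤ M.countP (v ∈ ·) := by
  induction k with
  | zero =>
    intro w hw
    refine ⟨0, by simp, by simp, fun v => ?_⟩
    have := hw {v} (by simp [IsStableSet])
    simpa using this
  | succ k ih =>
    intro w hw
    obtain ⟨Q, hQ, hred⟩ := exists_clique_reducing G hG w k hw
    obtain ⟨M, hMk, hMcl, hMc⟩ := ih _ hred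
    refine ⟨Q ::ₘ M, by rw [Multiset.card_cons, hMk], ?_, ?_⟩
    · intro B hB
      rcases Multiset.mem_cons.1 hB with rfl | hB
      · exact hQ
      · exact hMcl B hB
    · intro u
      have := hMc u
      rw [Multiset.countP_cons]
      omega

lemma exists_maximalClique_superset {V : Type*} [Fintype V] (G : SimpleGraph V) {Q : Finset V}
    (hQ : IsCliqueF G Q) : ∃ R, Q ⊆ R ∧ IsMaximalCliqueF G R := by
  obtain ⟨R, hQR, hR⟩ := Finite.exists_le_maximal (p := IsCliqueF G) hQ
  exact ⟨R, hQR, hR.prop, fun R' hR' hle => (hR.eq_of_le hR' hle).symm⟩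

open Classical in
/-- for a perfect graph with integer weights, there is an
integer-valued core imputation of the investment management game. -/
theorem integral_core_imputation {V : Type*} [Fintype V] (G : SimpleGraph V)
    (hG : IsPerfect G) (w : V → ℕ) :
    ∃ y : Finset V → ℕ,
      (∑ Q ∈ maximalCliques G, y Q = costNat G w univ) ∧
      (∀ S : Finset V,
        costNat G w S ≤
          ∑ Q ∈ (maximalCliques G).filter (fun Q => (Q ∩ S).Nonempty), y Q) := by
  obtain ⟨M, hMk, hMcl, hMc⟩ := exists_clique_cover G hG (costNat G w univ) w (by
    intro O hO
    exact Finset.le_sup' (fun O => ∑ v ∈ O, w v) (by simp [hO]))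
  have hext : ∀ Q, ∃ R, IsCliqueF G Q → Q ⊆ R ∧ IsMaximalCliqueF G R := by
    intro Q
    by_cases hQ : IsCliqueF G Q
    · obtain ⟨R, hR⟩ := exists_maximalClique_superset G hQ
      exact ⟨R, fun _ => hR⟩
    · exact ⟨∅, fun h => absurd h hQ⟩
  choose e he using hext
  have hmax : ∀ R ∈ M.map e, IsMaximalCliqueF G R := by
    intro R hR
    obtain ⟨Q, hQ, rfl⟩ := Multiset.mem_map.1 hR
    exact (he Q (hMcl Q hQ)).2
  have hmem : ∀ R ∈ M.map e, R ∈ maximalCliques G := fun R hR => by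
    simp [maximalCliques, hmax R hR]
  have hcov : ∀ v, w v ≤ (M.map e).countP (v ∈ ·) := by
    intro v
    refine (hMc v).trans ?_
    rw [Multiset.countP_map, Multiset.countP_eq_card_filter]
    refine Multiset.card_le_card (Multiset.le_filter.2 ⟨Multiset.filter_le _ _, fun Q hQ => ?_⟩)
    rw [Multiset.mem_filter] at hQ
    exact (he Q (hMcl Q hQ.1)).1 hQ.2
  refine ⟨fun Q => (M.map e).count Q, ?_, fun S => ?_⟩
  · rw [Multiset.sum_count_eq_card hmem, Multiset.card_map, hMk]
  · refine Finset.sup'_le _ _ fun O hO => ?_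
    rw [Finset.mem_filter, Finset.mem_powerset] at hO
    have hsum : ∑ Q ∈ (maximalCliques G).filter (fun Q => (Q ∩ S).Nonempty), (M.map e).count Q
        = (M.map e).countP (fun Q => (Q ∩ S).Nonempty) := by
      rw [Multiset.countP_eq_card_filter, ← Multiset.sum_count_eq_card
        (s := (maximalCliques G).filter (fun Q => (Q ∩ S).Nonempty))]
      · refine Finset.sum_congr rfl fun Q hQ => ?_
        rw [Multiset.count_filter_of_pos (p := fun Q => (Q ∩ S).Nonempty) (Finset.mem_filter.1 hQ).2]
      · intro Q hQ
        rw [Multiset.mem_filter] at hQ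
        exact Finset.mem_filter.2 ⟨hmem Q hQ.1, hQ.2⟩
    rw [hsum]
    calc ∑ v ∈ O, w v ≤ ∑ v ∈ O, (M.map e).countP (v ∈ ·) :=
          Finset.sum_le_sum fun v _ => hcov v
      _ ≤ (M.map e).countP (fun Q => (Q ∩ O).Nonempty) :=
          sum_countP_le_countP O _ fun Q hQ =>
            card_clique_inter_stable_le_one (hmax Q hQ).1 hO.2
      _ ≤ (M.map e).countP (fun Q => (Q ∩ S).Nonempty) := by
          rw [Multiset.countP_eq_card_filter, Multiset.countP_eq_card_filter]
          exact Multiset.card_le_card (Multiset.monotone_filter_right _ fun Q hQ =>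
            hQ.mono (Finset.inter_subset_inter_left hO.1))
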